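/- Let ϑ₁, ϑ₂, ϑ₃ be Beurling weights on ℝ^d and 1 < p, q, r < ∞. Assume ϑ₃ ≺ ϑ₁ and that ϑ₃(x)/ϑ₁(x) does not tend to zero as |x| → ∞. Then A^{p,1,q,r}_{ϑ₁,ϑ₂}(ℝ^d) ⊆ A^{p,1,q,r}_{ϑ₃,ϑ₂}(ℝ^d) and the inclusion map i : A^{p,1,q,r}_{ϑ₁,ϑ₂}(ℝ^d) → A^{p,1,q,r}_{ϑ₃,ϑ₂}(ℝ^d) is never a compact operator: there exists a sequence bounded in ‖·‖_{A_{ϑ₁,ϑ₂}} with no subsequence converging in the norm ‖·‖_{A_{ϑ₃,ϑ₂}}. -/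

import Mathlib

open MeasureTheory Filter Topology
open scoped ENNReal NNReal BigOperators

noncomputable section

/-- The unit cube `α + [0,1)^d` at the integer point `α ∈ ℤ^d`. -/
def cube {d : ℕ} (α : Fin d → ℤ) : Set (Fin d → ℝ) :=
  Set.univ.pi fun i => Set.Ico (α i : ℝ) ((α i : ℝ) + 1)

/-- The weighted amalgam norm `‖f‖_{pq,ω}` of the space `(L^p_ω, ℓ^q)`. -/
def amalgamNorm {d : ℕ} (p q : ℝ) (ω : (Fin d → ℝ) → ℝ) (f : (Fin d → ℝ) → ℂ) : ℝ≥0∞ :=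
  (∑' α : Fin d → ℤ,
      (eLpNorm (fun x => ω x • f x) (ENNReal.ofReal p) (volume.restrict (cube α))) ^ q) ^ (1 / q)

/-- Membership in the weighted amalgam space `(L^p_ω, ℓ^q)`. -/
def MemAmalgam {d : ℕ} (p q : ℝ) (ω : (Fin d → ℝ) → ℝ) (f : (Fin d → ℝ) → ℂ) : Prop :=
  Measurable f ∧ amalgamNorm p q ω f < ⊤

/-- A Beurling weight: measurable, `ϑ ≥ 1` and submultiplicative. -/
def IsBeurling {d : ℕ} (ϑ : (Fin d → ℝ) → ℝ) : Prop :=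
  Measurable ϑ ∧ (∀ x, 1 ≤ ϑ x) ∧ ∀ x y, ϑ (x + y) ≤ ϑ x * ϑ y

/-- The Fourier transform `f̂(ξ) = ∫ f(x) e^{-2πi⟨x,ξ⟩} dx`. -/
def fourierT {d : ℕ} (f : (Fin d → ℝ) → ℂ) (ξ : Fin d → ℝ) : ℂ :=
  ∫ x : Fin d → ℝ,
    Complex.exp (-(2 * (Real.pi : ℂ) * Complex.I * ∑ i, (x i : ℂ) * (ξ i : ℂ))) * f x

/-- The norm of `A^{p,1,q,r}_{ϑ₁,ϑ₂}(ℝ^d)`. -/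
def ANorm {d : ℕ} (p q r : ℝ) (ϑ₁ ϑ₂ : (Fin d → ℝ) → ℝ) (f : (Fin d → ℝ) → ℂ) : ℝ≥0∞ :=
  amalgamNorm p 1 ϑ₁ f + amalgamNorm q r ϑ₂ (fourierT f)

/-- Membership in `A^{p,1,q,r}_{ϑ₁,ϑ₂}(ℝ^d)`. -/
def MemA {d : ℕ} (p q r : ℝ) (ϑ₁ ϑ₂ : (Fin d → ℝ) → ℝ) (f : (Fin d → ℝ) → ℂ) : Prop :=
  MemAmalgam p 1 ϑ₁ f ∧ MemAmalgam q r ϑ₂ (fourierT f)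

/-- Convolution `(f∗g)(x) = ∫ f(x−t)g(t) dt`. -/
def convF {d : ℕ} (f g : (Fin d → ℝ) → ℂ) (x : Fin d → ℝ) : ℂ :=
  ∫ t : Fin d → ℝ, f (x - t) * g t

/-- `ϑ ≺ ϑ'` : domination of weights up to a constant. -/
def Prec {d : ℕ} (ϑ ϑ' : (Fin d → ℝ) → ℝ) : Prop :=
  ∃ C : ℝ, 0 < C ∧ ∀ x, ϑ x ≤ C * ϑ' x

/-- The Beurling–Domar condition `∑_{n≥1} log ϑ(nx)/n² < ∞`. -/
def BeurlingDomar {d : ℕ} (ϑ : (Fin d → ℝ) → ℝ) : Prop :=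
  ∀ x : Fin d → ℝ, Summable fun n : ℕ => Real.log (ϑ ((n : ℝ) • x)) / (n : ℝ) ^ 2

/-- `w` does not tend to zero as `|x| → ∞`. -/
def NotVanishingAtInfty {d : ℕ} (w : (Fin d → ℝ) → ℝ) : Prop :=
  ∃ δ : ℝ, 0 < δ ∧ ∀ R : ℝ, 0 < R → ∃ x : Fin d → ℝ, R < ‖x‖ ∧ δ ≤ w x

end

/-!
Translate the Gaussian along points `a n → ∞` where `ϑ₃ / ϑ₁ ≥ δ` and divide by `ϑ₁ (a n)`.
Submultiplicativity of `ϑ₁` keeps the translates bounded in `(L^p_{ϑ₁}, ℓ¹)`; the Fourier transforms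
are dominated by one fixed Gaussian, which beats the at most exponential growth of `ϑ₂`. A limit
of a subsequence in `(L^p_{ϑ₃}, ℓ¹)` has to vanish, because the translates leave every fixed cube.
But the local norm of the `n`-th function on the cube containing `a n` stays above a multiple of
`δ`, so no subsequence tends to zero.
-/

variable {d : ℕ} {p q r : ℝ} {ω ω' ϑ : (Fin d → ℝ) → ℝ} {f : (Fin d → ℝ) → ℂ}

/-! ### Sums over the integer lattice -/

lemma tsum_pi_prod {d : ℕ} {κ : Fin d → Type*} (g : ∀ i, κ i → ℝ≥0∞) :
    ∑' α : ∀ i, κ i, ∏ i, g i (α i) = ∏ i, ∑' n, g i n := by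
  induction d with
  | zero => simp
  | succ d ih =>
    rw [← (Fin.consEquiv κ).tsum_eq, ENNReal.tsum_prod']
    simp only [Fin.consEquiv_apply, Fin.prod_univ_succ, Fin.cons_zero, Fin.cons_succ,
      ENNReal.tsum_mul_left, ENNReal.tsum_mul_right, ih]

lemma tsum_ofReal_exp_neg_abs_rpow_lt_top (hq : 0 < q) :
    ∑' n : ℤ, ENNReal.ofReal (Real.exp (-|(n : ℝ)|)) ^ q < ⊤ := by
  have hnat : Summable fun n : ℕ => Real.exp (n * -q) :=
    Real.summable_exp_nat_mul_iff.mpr (neg_lt_zero.mpr hq)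
  have hint : Summable fun n : ℤ => Real.exp (|(n : ℝ)| * -q) :=
    .of_nat_of_neg (by simpa using hnat) (by simpa using hnat)
  convert hint.tsum_ofReal_lt_top using 4 with n
  rw [ENNReal.ofReal_rpow_of_pos (Real.exp_pos _), ← Real.exp_mul, neg_mul, mul_neg]

/-- The `ℓ^q(ℤ^d)` norm of the model decay `β ↦ exp (-(|β₁| + ⋯ + |β_d|))`. -/
noncomputable def latticeExpNorm (d : ℕ) (q : ℝ) : ℝ≥0∞ :=
  (∑' β : Fin d → ℤ, ENNReal.ofReal (Real.exp (-∑ i, |(β i : ℝ)|)) ^ q) ^ (1 / q)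

lemma latticeExpNorm_lt_top (hq : 0 < q) : latticeExpNorm d q < ⊤ := by
  refine ENNReal.rpow_lt_top_of_nonneg (by positivity) (ne_of_lt ?_)
  have hprod (β : Fin d → ℤ) : ENNReal.ofReal (Real.exp (-∑ i, |(β i : ℝ)|)) ^ q =
      ∏ i, ENNReal.ofReal (Real.exp (-|(β i : ℝ)|)) ^ q := by
    rw [← Finset.sum_neg_distrib, Real.exp_sum,
      ENNReal.ofReal_prod_of_nonneg fun _ _ => (Real.exp_pos _).le,
      ENNReal.prod_rpow_of_nonneg hq.le]
  simp only [hprod, tsum_pi_prod fun _ (n : ℤ) => ENNReal.ofReal (Real.exp (-|(n : ℝ)|)) ^ q]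
  exact ENNReal.prod_lt_top fun _ _ => tsum_ofReal_exp_neg_abs_rpow_lt_top hq

lemma tsum_const_mul_rpow_rpow {κ : Type*} (hq : 0 < q) (c : ℝ≥0∞) (u : κ → ℝ≥0∞) :
    (∑' k, (c * u k) ^ q) ^ (1 / q) = c * (∑' k, u k ^ q) ^ (1 / q) := by
  simp only [ENNReal.mul_rpow_of_nonneg _ _ hq.le, ENNReal.tsum_mul_left,
    ENNReal.mul_rpow_of_nonneg _ _ (one_div_nonneg.mpr hq.le), ← ENNReal.rpow_mul,
    mul_one_div_cancel hq.ne', ENNReal.rpow_one]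

/-! ### Local norms and amalgam norms -/

lemma measurableSet_cube (α : Fin d → ℤ) : MeasurableSet (cube α) :=
  .univ_pi fun _ => measurableSet_Ico

lemma isBounded_cube (α : Fin d → ℤ) : Bornology.IsBounded (cube α) :=
  .pi fun _ => Metric.isBounded_Ico _ _

lemma mem_cube_floor (a : Fin d → ℝ) : a ∈ cube fun i => ⌊a i⌋ :=
  fun i _ => ⟨Int.floor_le (a i), Int.lt_floor_add_one (a i)⟩

lemma abs_sub_apply_le_one_of_mem_cube {α : Fin d → ℤ} {x y : Fin d → ℝ} (hx : x ∈ cube α)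
    (hy : y ∈ cube α) (i : Fin d) : |x i - y i| ≤ 1 := by
  have hxi := hx i trivial
  have hyi := hy i trivial
  rw [abs_le]
  constructor <;> linarith [hxi.1, hxi.2, hyi.1, hyi.2]

instance isProbabilityMeasure_restrict_cube (α : Fin d → ℤ) :
    IsProbabilityMeasure ((volume : Measure (Fin d → ℝ)).restrict (cube α)) :=
  ⟨by simp [cube, Real.volume_pi_Ico]⟩

/-- The local norm `‖f·ω‖_{L^p(α + [0,1)^d)}`, the summand of `amalgamNorm`. -/
noncomputable def cubeNorm (p : ℝ) (ω : (Fin d → ℝ) → ℝ) (f : (Fin d → ℝ) → ℂ) (α : Fin d → ℤ) :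
    ℝ≥0∞ :=
  eLpNorm (fun x => ω x • f x) (ENNReal.ofReal p) (volume.restrict (cube α))

lemma amalgamNorm_eq_tsum_cubeNorm (p q : ℝ) (ω : (Fin d → ℝ) → ℝ) (f : (Fin d → ℝ) → ℂ) :
    amalgamNorm p q ω f = (∑' α, cubeNorm p ω f α ^ q) ^ (1 / q) := rfl

lemma cubeNorm_le_amalgamNorm (hq : 0 < q) (α : Fin d → ℤ) :
    cubeNorm p ω f α ≤ amalgamNorm p q ω f := by
  rw [amalgamNorm_eq_tsum_cubeNorm, one_div, ENNReal.le_rpow_inv_iff hq]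
  exact ENNReal.le_tsum (f := fun α => cubeNorm p ω f α ^ q) α

lemma cubeNorm_le_of_forall_mem_le {α : Fin d → ℤ} {c : ℝ}
    (h : ∀ x ∈ cube α, ‖ω x • f x‖ ≤ c) : cubeNorm p ω f α ≤ ENNReal.ofReal c :=
  (eLpNorm_le_of_ae_bound (ae_restrict_of_forall_mem (measurableSet_cube α) h)).trans (by simp)

lemma le_cubeNorm_of_forall_mem_le (hp : 0 < p) {α : Fin d → ℤ} {c : ℝ} (hc : 0 ≤ c)
    (h : ∀ x ∈ cube α, c ≤ ‖ω x • f x‖) : ENNReal.ofReal c ≤ cubeNorm p ω f α := by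
  calc ENNReal.ofReal c
      ≤ eLpNorm (fun _ => c) (ENNReal.ofReal p) (volume.restrict (cube α)) := by
        rw [eLpNorm_const _ (by simpa using hp) (NeZero.ne _)]
        simpa using Real.ofReal_le_enorm c
    _ ≤ cubeNorm p ω f α := by
        refine eLpNorm_mono_ae (ae_restrict_of_forall_mem (measurableSet_cube α) fun x hx => ?_)
        rw [Real.norm_of_nonneg hc]
        exact h x hx

lemma cubeNorm_le_const_mul {C : ℝ} (h : ∀ x, ‖ω x‖ ≤ C * ‖ω' x‖) (α : Fin d → ℤ) :
    cubeNorm p ω f α ≤ ENNReal.ofReal C * cubeNorm p ω' f α := by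
  refine eLpNorm_le_mul_eLpNorm_of_ae_le_mul (.of_forall fun x => ?_) _
  rw [norm_smul, norm_smul, ← mul_assoc]
  exact mul_le_mul_of_nonneg_right (h x) (norm_nonneg _)

lemma amalgamNorm_le_const_mul (hq : 0 < q) {C : ℝ} (h : ∀ x, ‖ω x‖ ≤ C * ‖ω' x‖) :
    amalgamNorm p q ω f ≤ ENNReal.ofReal C * amalgamNorm p q ω' f := by
  rw [amalgamNorm_eq_tsum_cubeNorm, amalgamNorm_eq_tsum_cubeNorm,
    ← tsum_const_mul_rpow_rpow hq]
  gcongr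
  exact cubeNorm_le_const_mul h _

lemma MemAmalgam.of_le_const_mul (hq : 0 < q) {C : ℝ} (h : ∀ x, ‖ω x‖ ≤ C * ‖ω' x‖)
    (hf : MemAmalgam p q ω' f) : MemAmalgam p q ω f :=
  ⟨hf.1, (amalgamNorm_le_const_mul hq h).trans_lt (ENNReal.mul_lt_top ENNReal.ofReal_lt_top hf.2)⟩

lemma cubeNorm_sub_comm (p : ℝ) (ω : (Fin d → ℝ) → ℝ) (f g : (Fin d → ℝ) → ℂ)
    (α : Fin d → ℤ) :
    cubeNorm p ω (fun x => f x - g x) α = cubeNorm p ω (fun x => g x - f x) α := by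
  simp only [cubeNorm, smul_sub]
  exact eLpNorm_sub_comm _ _ _ _

lemma cubeNorm_le_cubeNorm_sub_add (hp : 1 ≤ p) (hω : Measurable ω) {f g : (Fin d → ℝ) → ℂ}
    (hf : Measurable f) (hg : Measurable g) (α : Fin d → ℤ) :
    cubeNorm p ω f α ≤ cubeNorm p ω (fun x => f x - g x) α + cubeNorm p ω g α := by
  have hadd := eLpNorm_add_le (μ := volume.restrict (cube α))
    (hω.smul (hf.sub hg)).aestronglyMeasurable (hω.smul hg).aestronglyMeasurable
    (p := ENNReal.ofReal p) (by simpa using hp)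
  rwa [← smul_add, sub_add_cancel] at hadd

-- The limit must be zero on every cube, so it does not contribute to the local norms at all.
lemma tendsto_cubeNorm_zero_of_tendsto_amalgamNorm_sub {ι : Type*} {l : Filter ι} [l.NeBot]
    (hp : 1 ≤ p) (hq : 0 < q) (hω : Measurable ω) {f : ι → (Fin d → ℝ) → ℂ}
    (hf : ∀ n, Measurable (f n)) {g : (Fin d → ℝ) → ℂ} (hg : Measurable g)
    (hlocal : ∀ α, Tendsto (fun n => cubeNorm p ω (f n) α) l (𝓝 0))
    (hlim : Tendsto (fun n => amalgamNorm p q ω fun x => f n x - g x) l (𝓝 0))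
    (α : ι → Fin d → ℤ) : Tendsto (fun n => cubeNorm p ω (f n) (α n)) l (𝓝 0) := by
  have hg_zero (β) : cubeNorm p ω g β = 0 := by
    have hle (n) : cubeNorm p ω g β ≤
        (amalgamNorm p q ω fun x => f n x - g x) + cubeNorm p ω (f n) β :=
      calc cubeNorm p ω g β
          ≤ cubeNorm p ω (fun x => f n x - g x) β + cubeNorm p ω (f n) β := by
            rw [cubeNorm_sub_comm p ω (f n)]
            exact cubeNorm_le_cubeNorm_sub_add hp hω hg (hf n) β
        _ ≤ _ := by gcongr; exact cubeNorm_le_amalgamNorm hq β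
    simpa using ge_of_tendsto' (hlim.add (hlocal β)) hle
  refine tendsto_of_tendsto_of_tendsto_of_le_of_le tendsto_const_nhds hlim (fun _ => zero_le) ?_
  intro n
  calc cubeNorm p ω (f n) (α n)
      ≤ cubeNorm p ω (fun x => f n x - g x) (α n) + cubeNorm p ω g (α n) :=
        cubeNorm_le_cubeNorm_sub_add hp hω (hf n) hg (α n)
    _ ≤ amalgamNorm p q ω fun x => f n x - g x := by
        rw [hg_zero, add_zero]
        exact cubeNorm_le_amalgamNorm hq (α n)

/-! ### Functions decaying exponentially away from a point -/

lemma cubeNorm_le_of_exp_decay {K : ℝ} {a : Fin d → ℝ}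
    (h : ∀ x, ‖ω x • f x‖ ≤ K * Real.exp (-∑ i, |x i - a i|)) (α : Fin d → ℤ) :
    cubeNorm p ω f α ≤ ENNReal.ofReal (K * Real.exp (2 * d)) *
      ENNReal.ofReal (Real.exp (-∑ i, |((α i - ⌊a i⌋ : ℤ) : ℝ)|)) := by
  have hK : 0 ≤ K := nonneg_of_mul_nonneg_left ((norm_nonneg _).trans (h 0)) (Real.exp_pos _)
  rw [← ENNReal.ofReal_mul (by positivity), mul_assoc, ← Real.exp_add]
  refine cubeNorm_le_of_forall_mem_le fun x hx => (h x).trans ?_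
  gcongr
  have hcoord (i : Fin d) : |((α i - ⌊a i⌋ : ℤ) : ℝ)| ≤ |x i - a i| + 2 := by
    have hxi := hx i trivial
    have hai := mem_cube_floor a i trivial
    have hdist := abs_le.mp (le_refl |x i - a i|)
    push_cast
    rw [abs_le]
    constructor <;> linarith [hxi.1, hxi.2, hai.1, hai.2, hdist.1, hdist.2]
  have hsum := Finset.sum_le_sum fun i (_ : i ∈ Finset.univ) => hcoord i
  rw [Finset.sum_add_distrib] at hsum
  simp only [Finset.sum_const, Finset.card_univ, Fintype.card_fin, nsmul_eq_mul] at hsum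
  linarith

lemma amalgamNorm_le_of_exp_decay (hq : 0 < q) {K : ℝ} {a : Fin d → ℝ}
    (h : ∀ x, ‖ω x • f x‖ ≤ K * Real.exp (-∑ i, |x i - a i|)) :
    amalgamNorm p q ω f ≤ ENNReal.ofReal (K * Real.exp (2 * d)) * latticeExpNorm d q := by
  rw [amalgamNorm_eq_tsum_cubeNorm, latticeExpNorm, ← tsum_const_mul_rpow_rpow hq,
    ← (Equiv.subRight fun i => ⌊a i⌋).tsum_eq fun β : Fin d → ℤ =>
      (ENNReal.ofReal (K * Real.exp (2 * d)) *
        ENNReal.ofReal (Real.exp (-∑ i, |(β i : ℝ)|))) ^ q]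
  gcongr with α
  exact cubeNorm_le_of_exp_decay h α

lemma exists_amalgamNorm_le_of_exp_decay (d : ℕ) (hq : 0 < q) (K : ℝ) :
    ∃ M : ℝ≥0, ∀ (p : ℝ) (ω : (Fin d → ℝ) → ℝ) (f : (Fin d → ℝ) → ℂ) (a : Fin d → ℝ),
      (∀ x, ‖ω x • f x‖ ≤ K * Real.exp (-∑ i, |x i - a i|)) → amalgamNorm p q ω f ≤ M := by
  lift latticeExpNorm d q to ℝ≥0 using (latticeExpNorm_lt_top hq).ne with S hS
  refine ⟨(K * Real.exp (2 * d)).toNNReal * S, fun p ω f a h => ?_⟩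
  rw [ENNReal.coe_mul, hS]
  exact amalgamNorm_le_of_exp_decay hq h

lemma norm_le_sum_abs (x : Fin d → ℝ) : ‖x‖ ≤ ∑ i, |x i| :=
  (pi_norm_le_iff_of_nonneg (by positivity)).mpr fun i =>
    Finset.single_le_sum (f := fun i => |x i|) (fun _ _ => abs_nonneg _) (Finset.mem_univ i)

lemma tendsto_cubeNorm_zero_of_exp_decay {ι : Type*} {l : Filter ι}
    {f : ι → (Fin d → ℝ) → ℂ} {a : ι → Fin d → ℝ} {K : ℝ}
    (h : ∀ n x, ‖ω x • f n x‖ ≤ K * Real.exp (-∑ i, |x i - a n i|))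
    (ha : Tendsto (fun n => ‖a n‖) l atTop) (α : Fin d → ℤ) :
    Tendsto (fun n => cubeNorm p ω (f n) α) l (𝓝 0) := by
  obtain ⟨R, hR⟩ := (isBounded_cube α).exists_norm_le
  have hbound (n) : cubeNorm p ω (f n) α ≤ ENNReal.ofReal (|K| * Real.exp (R - ‖a n‖)) := by
    refine cubeNorm_le_of_forall_mem_le fun x hx => (h n x).trans ?_
    have hdist : ‖a n‖ - R ≤ ∑ i, |x i - a n i| :=
      calc ‖a n‖ - R ≤ ‖a n‖ - ‖x‖ := by linarith [hR x hx]
        _ ≤ ‖x - a n‖ := by rw [norm_sub_rev]; exact norm_sub_norm_le _ _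
        _ ≤ ∑ i, |x i - a n i| := norm_le_sum_abs _
    gcongr
    · exact le_abs_self K
    · linarith
  have hexp : Tendsto (fun n => |K| * Real.exp (R - ‖a n‖)) l (𝓝 0) := by
    have hbot : Tendsto (fun n => R - ‖a n‖) l atBot := by
      simpa only [sub_eq_add_neg, Function.comp_def] using
        tendsto_atBot_add_const_left l R (tendsto_neg_atTop_atBot.comp ha)
    simpa using (Real.tendsto_exp_atBot.comp hbot).const_mul |K|
  refine tendsto_of_tendsto_of_tendsto_of_le_of_le tendsto_const_nhds ?_ (fun _ => zero_le) hbound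
  simpa using ENNReal.tendsto_ofReal hexp

/-! ### Growth of Beurling weights -/

/-- At most exponential growth, `|ω x| ≤ C exp (A |x|)`; this is what makes a weight compatible with
Gaussian decay. The norm is the sup norm of `Fin d → ℝ`. -/
def HasExpGrowth (ω : (Fin d → ℝ) → ℝ) : Prop :=
  ∃ C A : ℝ, ∀ x, ‖ω x‖ ≤ C * Real.exp (A * ‖x‖)

lemma IsBeurling.pos (h : IsBeurling ϑ) (x : Fin d → ℝ) : 0 < ϑ x :=
  one_pos.trans_le (h.2.1 x)

lemma IsBeurling.le_mul_sub (h : IsBeurling ϑ) (x a : Fin d → ℝ) : ϑ x ≤ ϑ a * ϑ (x - a) := by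
  simpa using h.2.2 a (x - a)

-- Steinhaus: some `E = {ϑ ≤ n} ∩ -{ϑ ≤ n}` has positive measure, so `E - E` is a neighbourhood of
-- zero, and `ϑ ≤ n * n` on it.
lemma IsBeurling.exists_eventually_le (h : IsBeurling ϑ) : ∃ B : ℝ, ∀ᶠ x in 𝓝 0, ϑ x ≤ B := by
  let E (n : ℕ) : Set (Fin d → ℝ) := {x | ϑ x ≤ n ∧ ϑ (-x) ≤ n}
  have hE (n) : MeasurableSet (E n) := (measurableSet_le h.1 measurable_const).inter
    (measurableSet_le (h.1.comp measurable_neg) measurable_const)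
  have hcover : ⋃ n, E n = Set.univ := by
    refine Set.eq_univ_of_forall fun x => Set.mem_iUnion.mpr ?_
    obtain ⟨n, hn⟩ := exists_nat_ge (max (ϑ x) (ϑ (-x)))
    exact ⟨n, max_le_iff.mp hn⟩
  obtain ⟨n, hn⟩ : ∃ n, 0 < volume (E n) :=
    exists_measure_pos_of_not_measure_iUnion_null (by simp [hcover, NeZero.ne])
  refine ⟨n * n, mem_of_superset
    (Measure.sub_mem_nhds_zero_of_addHaar_pos volume (E n) (hE n) hn) ?_⟩
  rintro _ ⟨u, hu, v, hv, rfl⟩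
  change ϑ (u - v) ≤ n * n
  rw [sub_eq_add_neg]
  exact (h.2.2 u (-v)).trans (mul_le_mul hu.1 hv.2 (h.pos _).le n.cast_nonneg)

lemma IsBeurling.succ_nsmul_le_pow (h : IsBeurling ϑ) (x : Fin d → ℝ) (n : ℕ) :
    ϑ ((n + 1) • x) ≤ ϑ x ^ (n + 1) := by
  induction n with
  | zero => simp
  | succ n ih =>
    rw [succ_nsmul, pow_succ]
    exact (h.2.2 _ _).trans (mul_le_mul_of_nonneg_right ih (h.pos x).le)

-- A point `x` is `n + 1` steps of length less than `ε`, where `n = ⌊‖x‖ / ε⌋`.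
lemma IsBeurling.hasExpGrowth (h : IsBeurling ϑ) : HasExpGrowth ϑ := by
  obtain ⟨B, hB⟩ := h.exists_eventually_le
  have hB_one : 1 ≤ B := (h.2.1 0).trans hB.self_of_nhds
  obtain ⟨ε, hε, hball⟩ := Metric.eventually_nhds_iff_ball.mp hB
  refine ⟨B, Real.log B / ε, fun x => ?_⟩
  set n := ⌊‖x‖ / ε⌋₊
  set y := ((n + 1 : ℕ) : ℝ)⁻¹ • x
  have hxy : x = (n + 1) • y := by
    rw [← Nat.cast_smul_eq_nsmul ℝ, smul_inv_smul₀ (by positivity)]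
  have hy : ϑ y ≤ B := by
    refine hball y ?_
    rw [mem_ball_zero_iff, norm_smul, norm_inv, Real.norm_natCast,
      inv_mul_lt_iff₀ (by positivity), ← div_lt_iff₀ hε, Nat.cast_succ]
    exact Nat.lt_floor_add_one _
  calc ‖ϑ x‖ = ϑ ((n + 1) • y) := by rw [Real.norm_of_nonneg (h.pos x).le, ← hxy]
    _ ≤ ϑ y ^ (n + 1) := h.succ_nsmul_le_pow y n
    _ ≤ B ^ (n + 1) := pow_le_pow_left₀ (h.pos y).le hy _
    _ = B * Real.exp (n * Real.log B) := by
        rw [Real.exp_nat_mul, Real.exp_log (by linarith), pow_succ']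
    _ ≤ B * Real.exp (‖x‖ / ε * Real.log B) := by
        gcongr
        · exact Real.log_nonneg hB_one
        · exact Nat.floor_le (by positivity)
    _ = B * Real.exp (Real.log B / ε * ‖x‖) := by ring_nf

lemma IsBeurling.exists_le_of_norm_le_one (h : IsBeurling ϑ) :
    ∃ B > 0, ∀ x, ‖x‖ ≤ 1 → ϑ x ≤ B := by
  obtain ⟨C, A, hϑ⟩ := h.hasExpGrowth
  have hC : 0 ≤ C := nonneg_of_mul_nonneg_left ((norm_nonneg _).trans (hϑ 0)) (Real.exp_pos _)
  have hbound (x : Fin d → ℝ) (hx : ‖x‖ ≤ 1) : ϑ x ≤ C * Real.exp |A| := by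
    refine (le_abs_self _).trans ((hϑ x).trans ?_)
    gcongr
    exact (mul_le_mul_of_nonneg_right (le_abs_self A) (norm_nonneg x)).trans
      (mul_le_of_le_one_right (abs_nonneg A) hx)
  exact ⟨_, (h.pos 0).trans_le (hbound 0 (by simp)), hbound⟩

/-! ### The Gaussian and the Fourier transform -/

/-- The Gaussian `x ↦ exp (-π |x|²)`, with the Euclidean `|x|`. -/
noncomputable def gaussian (x : Fin d → ℝ) : ℂ :=
  Complex.exp (-Real.pi * ∑ i, (x i : ℂ) ^ 2)

lemma continuous_gaussian : Continuous (gaussian (d := d)) := by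
  unfold gaussian
  fun_prop

lemma norm_gaussian (x : Fin d → ℝ) : ‖gaussian x‖ = Real.exp (-Real.pi * ∑ i, x i ^ 2) := by
  rw [gaussian, Complex.norm_exp]
  norm_cast

lemma HasExpGrowth.exists_norm_smul_gaussian_le (h : HasExpGrowth ω) :
    ∃ K : ℝ, ∀ x, ‖ω x • gaussian x‖ ≤ K * Real.exp (-∑ i, |x i|) := by
  obtain ⟨C, A, hω⟩ := h
  have hC : 0 ≤ C := nonneg_of_mul_nonneg_left ((norm_nonneg _).trans (hω 0)) (Real.exp_pos _)
  refine ⟨C * Real.exp (d * (|A| + 1) ^ 2), fun x => ?_⟩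
  have hnorm : A * ‖x‖ ≤ |A| * ∑ i, |x i| :=
    mul_le_mul (le_abs_self A) (norm_le_sum_abs x) (norm_nonneg x) (abs_nonneg A)
  have hcoord (i : Fin d) : (|A| + 1) * |x i| ≤ Real.pi * x i ^ 2 + (|A| + 1) ^ 2 := by
    rw [← sq_abs (x i)]
    nlinarith [sq_nonneg (|x i| - (|A| + 1)), sq_nonneg (|x i|), sq_nonneg (|A| + 1),
      Real.pi_gt_three]
  have hsum := Finset.sum_le_sum fun i (_ : i ∈ Finset.univ) => hcoord i
  rw [Finset.sum_add_distrib, ← Finset.mul_sum, ← Finset.mul_sum] at hsum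
  simp only [Finset.sum_const, Finset.card_univ, Fintype.card_fin, nsmul_eq_mul] at hsum
  calc ‖ω x • gaussian x‖
      ≤ C * Real.exp (A * ‖x‖) * Real.exp (-Real.pi * ∑ i, x i ^ 2) := by
        rw [norm_smul, norm_gaussian]
        gcongr
        exact hω x
    _ = C * Real.exp (A * ‖x‖ - Real.pi * ∑ i, x i ^ 2) := by
        rw [mul_assoc, ← Real.exp_add, neg_mul, sub_eq_add_neg]
    _ ≤ C * Real.exp (d * (|A| + 1) ^ 2 - ∑ i, |x i|) := by
        refine mul_le_mul_of_nonneg_left (Real.exp_le_exp.mpr ?_) hC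
        linarith
    _ = C * Real.exp (d * (|A| + 1) ^ 2) * Real.exp (-∑ i, |x i|) := by
        rw [mul_assoc, ← Real.exp_add, sub_eq_add_neg]

lemma fourierT_const_smul (c : ℝ) (f : (Fin d → ℝ) → ℂ) (ξ : Fin d → ℝ) :
    fourierT (fun x => c • f x) ξ = c • fourierT f ξ := by
  simp only [fourierT, mul_smul_comm, integral_smul]

lemma fourierT_comp_sub_right (f : (Fin d → ℝ) → ℂ) (a ξ : Fin d → ℝ) :
    fourierT (fun x => f (x - a)) ξ =
      Complex.exp (-(2 * (Real.pi : ℂ) * Complex.I * ∑ i, (a i : ℂ) * (ξ i : ℂ))) *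
        fourierT f ξ := by
  rw [fourierT, ← integral_add_right_eq_self _ a, fourierT, ← integral_const_mul]
  refine integral_congr_ae (.of_forall fun x => ?_)
  simp only [Pi.add_apply, Complex.ofReal_add, add_mul, Finset.sum_add_distrib, mul_add, neg_add,
    Complex.exp_add, add_sub_cancel_right]
  ring

lemma norm_fourierT_comp_sub_right (f : (Fin d → ℝ) → ℂ) (a ξ : Fin d → ℝ) :
    ‖fourierT (fun x => f (x - a)) ξ‖ = ‖fourierT f ξ‖ := by
  have hphase : -(2 * (Real.pi : ℂ) * Complex.I * ∑ i, (a i : ℂ) * (ξ i : ℂ)) =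
      ((-(2 * Real.pi * ∑ i, a i * ξ i) : ℝ) : ℂ) * Complex.I := by
    push_cast
    ring
  rw [fourierT_comp_sub_right, norm_mul, hphase, Complex.norm_exp_ofReal_mul_I, one_mul]

lemma fourierT_gaussian : fourierT (gaussian (d := d)) = gaussian := by
  ext ξ
  have hπ : (Real.pi : ℂ) ≠ 0 := by exact_mod_cast Real.pi_ne_zero
  have hgauss := GaussianFourier.integral_cexp_neg_mul_sum_add (b := Real.pi)
    (by simpa using Real.pi_pos) fun i => -(2 * (Real.pi : ℂ) * Complex.I * (ξ i : ℂ))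
  rw [div_self hπ, Complex.one_cpow, one_mul] at hgauss
  calc fourierT gaussian ξ
      = ∫ x : Fin d → ℝ, Complex.exp (-Real.pi * ∑ i, (x i : ℂ) ^ 2 +
          ∑ i, -(2 * (Real.pi : ℂ) * Complex.I * (ξ i : ℂ)) * (x i : ℂ)) := by
        refine integral_congr_ae (.of_forall fun x => ?_)
        simp only [gaussian, ← Complex.exp_add, Finset.mul_sum, ← Finset.sum_neg_distrib]
        rw [add_comm]
        congr 2
        exact Finset.sum_congr rfl fun i _ => by ring
    _ = gaussian ξ := by
        rw [hgauss, gaussian]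
        congr 1
        simp only [neg_sq, mul_pow, Complex.I_sq, ← Finset.mul_sum]
        field_simp
        ring

/-! ### Normalized translates of the Gaussian -/

/-- The Gaussian centred at `a` and divided by `ϑ a`, which makes its size in `(L^p_ϑ, ℓ^q)`
independent of `a`. -/
noncomputable def normalizedGaussian (ϑ : (Fin d → ℝ) → ℝ) (a x : Fin d → ℝ) : ℂ :=
  (ϑ a)⁻¹ • gaussian (x - a)

lemma measurable_normalizedGaussian (ϑ : (Fin d → ℝ) → ℝ) (a : Fin d → ℝ) :
    Measurable (normalizedGaussian ϑ a) :=
  (continuous_gaussian.comp (continuous_sub_right a)).measurable.const_smul (ϑ a)⁻¹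

lemma fourierT_normalizedGaussian (ϑ : (Fin d → ℝ) → ℝ) (a ξ : Fin d → ℝ) :
    fourierT (normalizedGaussian ϑ a) ξ = (ϑ a)⁻¹ •
      (Complex.exp (-(2 * (Real.pi : ℂ) * Complex.I * ∑ i, (a i : ℂ) * (ξ i : ℂ))) *
        gaussian ξ) :=
  (fourierT_const_smul _ _ ξ).trans
    (by rw [fourierT_comp_sub_right gaussian, fourierT_gaussian])

lemma measurable_fourierT_normalizedGaussian (ϑ : (Fin d → ℝ) → ℝ) (a : Fin d → ℝ) :
    Measurable (fourierT (normalizedGaussian ϑ a)) := by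
  simp only [funext (fourierT_normalizedGaussian ϑ a)]
  have := continuous_gaussian (d := d)
  exact Continuous.measurable (by fun_prop)

lemma IsBeurling.norm_fourierT_normalizedGaussian_le (h : IsBeurling ϑ) (a ξ : Fin d → ℝ) :
    ‖fourierT (normalizedGaussian ϑ a) ξ‖ ≤ ‖gaussian ξ‖ :=
  calc ‖fourierT (normalizedGaussian ϑ a) ξ‖ = ‖(ϑ a)⁻¹‖ * ‖gaussian ξ‖ := by
        rw [← fourierT_gaussian, ← norm_fourierT_comp_sub_right gaussian a, ← norm_smul,
          ← fourierT_const_smul]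
        rfl
    _ ≤ ‖gaussian ξ‖ := by
        refine mul_le_of_le_one_left (norm_nonneg _) ?_
        rw [Real.norm_of_nonneg (inv_nonneg.mpr (h.pos a).le)]
        exact inv_le_one_of_one_le₀ (h.2.1 a)

lemma IsBeurling.norm_smul_normalizedGaussian_le (h : IsBeurling ϑ) (a x : Fin d → ℝ) :
    ‖ϑ x • normalizedGaussian ϑ a x‖ ≤ ‖ϑ (x - a) • gaussian (x - a)‖ := by
  rw [normalizedGaussian, smul_smul, norm_smul, norm_smul]
  gcongr
  rw [Real.norm_of_nonneg (mul_pos (h.pos x) (inv_pos.mpr (h.pos a))).le,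
    Real.norm_of_nonneg (h.pos _).le, ← div_eq_mul_inv, div_le_iff₀' (h.pos a)]
  exact h.le_mul_sub x a

lemma IsBeurling.exists_norm_smul_normalizedGaussian_le (h : IsBeurling ϑ) :
    ∃ K : ℝ, ∀ a x,
      ‖ϑ x • normalizedGaussian ϑ a x‖ ≤ K * Real.exp (-∑ i, |x i - a i|) := by
  obtain ⟨K, hK⟩ := h.hasExpGrowth.exists_norm_smul_gaussian_le
  exact ⟨K, fun a x => (h.norm_smul_normalizedGaussian_le a x).trans (hK (x - a))⟩

lemma IsBeurling.exists_amalgamNorm_normalizedGaussian_le (h : IsBeurling ϑ) (p : ℝ)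
    (hq : 0 < q) : ∃ M : ℝ≥0, ∀ a, amalgamNorm p q ϑ (normalizedGaussian ϑ a) ≤ M := by
  obtain ⟨K, hK⟩ := h.exists_norm_smul_normalizedGaussian_le
  obtain ⟨M, hM⟩ := exists_amalgamNorm_le_of_exp_decay d hq K
  exact ⟨M, fun a => hM p ϑ _ a (hK a)⟩

lemma IsBeurling.exists_amalgamNorm_fourierT_normalizedGaussian_le (h : IsBeurling ϑ)
    (hω : HasExpGrowth ω) (q : ℝ) (hr : 0 < r) :
    ∃ M : ℝ≥0, ∀ a, amalgamNorm q r ω (fourierT (normalizedGaussian ϑ a)) ≤ M := by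
  obtain ⟨K, hK⟩ := hω.exists_norm_smul_gaussian_le
  obtain ⟨M, hM⟩ := exists_amalgamNorm_le_of_exp_decay d hr K
  refine ⟨M, fun a => hM q ω _ 0 fun ξ => ?_⟩
  calc ‖ω ξ • fourierT (normalizedGaussian ϑ a) ξ‖ ≤ ‖ω ξ • gaussian ξ‖ := by
        rw [norm_smul, norm_smul]
        gcongr
        exact h.norm_fourierT_normalizedGaussian_le a ξ
    _ ≤ K * Real.exp (-∑ i, |ξ i - (0 : Fin d → ℝ) i|) := by simpa using hK ξ

lemma IsBeurling.exists_ANorm_normalizedGaussian_le (h : IsBeurling ϑ) (hω : HasExpGrowth ω)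
    (p q : ℝ) (hr : 0 < r) :
    ∃ M : ℝ≥0, ∀ a, ANorm p q r ϑ ω (normalizedGaussian ϑ a) ≤ M := by
  obtain ⟨M₁, hM₁⟩ := h.exists_amalgamNorm_normalizedGaussian_le p one_pos
  obtain ⟨M₂, hM₂⟩ := h.exists_amalgamNorm_fourierT_normalizedGaussian_le hω q hr
  exact ⟨M₁ + M₂, fun a => by
    rw [ENNReal.coe_add]
    exact add_le_add (hM₁ a) (hM₂ a)⟩

lemma memA_normalizedGaussian {a : Fin d → ℝ}
    (h : ANorm p q r ϑ ω (normalizedGaussian ϑ a) < ⊤) :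
    MemA p q r ϑ ω (normalizedGaussian ϑ a) :=
  ⟨⟨measurable_normalizedGaussian ϑ a, (ENNReal.add_lt_top.mp h).1⟩,
    measurable_fourierT_normalizedGaussian ϑ a, (ENNReal.add_lt_top.mp h).2⟩

lemma IsBeurling.exists_le_cubeNorm_normalizedGaussian (h : IsBeurling ω) (hp : 0 < p) :
    ∃ c > 0, ∀ (ϑ : (Fin d → ℝ) → ℝ) (a : Fin d → ℝ),
      ENNReal.ofReal (c * (ω a / ϑ a)) ≤
        cubeNorm p ω (normalizedGaussian ϑ a) fun i => ⌊a i⌋ := by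
  obtain ⟨B, hB, hωB⟩ := h.exists_le_of_norm_le_one
  refine ⟨Real.exp (-Real.pi * d) / B, by positivity, fun ϑ a => ?_⟩
  refine (ENNReal.ofReal_le_ofReal (le_abs_self _)).trans
    (le_cubeNorm_of_forall_mem_le hp (abs_nonneg _) fun x hx => ?_)
  have hxa (i : Fin d) : |x i - a i| ≤ 1 :=
    abs_sub_apply_le_one_of_mem_cube hx (mem_cube_floor a) i
  have hω_le : ω a ≤ ω x * B := by
    refine (h.le_mul_sub a x).trans ?_
    gcongr
    · exact (h.pos x).le
    · refine hωB _ ((pi_norm_le_iff_of_nonneg zero_le_one).mpr fun i => ?_)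
      rw [Pi.sub_apply, norm_sub_rev]
      exact hxa i
  have hgauss : Real.exp (-Real.pi * d) ≤ ‖gaussian (x - a)‖ := by
    have hsq : ∑ i, (x - a) i ^ 2 ≤ d := by
      simpa using Finset.sum_le_sum fun i (_ : i ∈ Finset.univ) =>
        (sq_le_one_iff_abs_le_one _).mpr (hxa i)
    rw [norm_gaussian, neg_mul, neg_mul]
    gcongr
  calc |Real.exp (-Real.pi * d) / B * (ω a / ϑ a)|
      = ω a / B * |(ϑ a)⁻¹| * Real.exp (-Real.pi * d) := by
        rw [div_eq_mul_inv (ω a), abs_mul, abs_mul, abs_of_pos (h.pos a),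
          abs_of_pos (by positivity)]
        ring
    _ ≤ ω x * |(ϑ a)⁻¹| * ‖gaussian (x - a)‖ := by
        have := h.pos x
        gcongr
        rwa [div_le_iff₀ hB]
    _ = ‖ω x • normalizedGaussian ϑ a x‖ := by
        rw [normalizedGaussian, norm_smul, norm_smul, Real.norm_of_nonneg (h.pos x).le,
          Real.norm_eq_abs, mul_assoc]

/-! ### Failure of compactness -/

lemma NotVanishingAtInfty.exists_seq {w : (Fin d → ℝ) → ℝ} (h : NotVanishingAtInfty w) :
    ∃ δ > 0, ∃ a : ℕ → Fin d → ℝ, Tendsto (fun n => ‖a n‖) atTop atTop ∧ ∀ n, δ ≤ w (a n) := by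
  obtain ⟨δ, hδ, hfar⟩ := h
  choose a ha hw using fun n : ℕ => hfar (n + 1) (by positivity)
  exact ⟨δ, hδ, a, tendsto_atTop_mono (fun n => (ha n).le)
    (tendsto_atTop_add_const_right _ 1 tendsto_natCast_atTop_atTop), hw⟩

lemma IsBeurling.not_tendsto_amalgamNorm_normalizedGaussian_sub {ι : Type*} {l : Filter ι}
    [l.NeBot] (hp : 1 ≤ p) (hq : 0 < q) (hϑ : IsBeurling ϑ) (hω : IsBeurling ω) {C : ℝ}
    (hC : ∀ x, ‖ω x‖ ≤ C * ‖ϑ x‖) {a : ι → Fin d → ℝ} (ha : Tendsto (fun n => ‖a n‖) l atTop)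
    {δ : ℝ} (hδ : 0 < δ) (hδa : ∀ n, δ ≤ ω (a n) / ϑ (a n)) {g : (Fin d → ℝ) → ℂ}
    (hg : Measurable g) :
    ¬ Tendsto (fun n => amalgamNorm p q ω fun x => normalizedGaussian ϑ (a n) x - g x) l (𝓝 0) := by
  intro hlim
  obtain ⟨K, hK⟩ := hϑ.exists_norm_smul_normalizedGaussian_le
  obtain ⟨c, hc, hlower⟩ := hω.exists_le_cubeNorm_normalizedGaussian (one_pos.trans_le hp)
  have hlocal (α) : Tendsto (fun n => cubeNorm p ω (normalizedGaussian ϑ (a n)) α) l (𝓝 0) := by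
    have hlocal_ϑ := ENNReal.Tendsto.const_mul (a := ENNReal.ofReal C)
      (tendsto_cubeNorm_zero_of_exp_decay (p := p) (fun n => hK (a n)) ha α)
      (.inr ENNReal.ofReal_ne_top)
    rw [mul_zero] at hlocal_ϑ
    exact tendsto_of_tendsto_of_tendsto_of_le_of_le tendsto_const_nhds hlocal_ϑ
      (fun _ => zero_le) fun _ => cubeNorm_le_const_mul hC α
  have hmoving := tendsto_cubeNorm_zero_of_tendsto_amalgamNorm_sub hp hq hω.1
    (fun n => measurable_normalizedGaussian ϑ (a n)) hg hlocal hlim fun n i => ⌊a n i⌋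
  have hle : ENNReal.ofReal (c * δ) ≤ 0 := ge_of_tendsto' hmoving fun n =>
    (ENNReal.ofReal_le_ofReal (by gcongr; exact hδa n)).trans (hlower ϑ (a n))
  exact (ENNReal.ofReal_pos.mpr (mul_pos hc hδ)).not_ge hle

theorem A_inclusion_never_compact_general (hp : 1 ≤ p) (_hq : 0 < q) (hr : 0 < r)
    {ϑ₁ ϑ₂ ϑ₃ : (Fin d → ℝ) → ℝ} (h1 : IsBeurling ϑ₁) (h2 : HasExpGrowth ϑ₂) (h3 : IsBeurling ϑ₃)
    (hprec : Prec ϑ₃ ϑ₁) (hnv : NotVanishingAtInfty (fun x => ϑ₃ x / ϑ₁ x)) :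
    (∀ f : (Fin d → ℝ) → ℂ, MemA p q r ϑ₁ ϑ₂ f → MemA p q r ϑ₃ ϑ₂ f) ∧
    ∃ f : ℕ → (Fin d → ℝ) → ℂ,
      (∀ n, MemA p q r ϑ₁ ϑ₂ (f n)) ∧
      (∃ M : ℝ, ∀ n, ANorm p q r ϑ₁ ϑ₂ (f n) ≤ ENNReal.ofReal M) ∧
      ¬ ∃ (φ : ℕ → ℕ) (g : (Fin d → ℝ) → ℂ), StrictMono φ ∧ MemA p q r ϑ₃ ϑ₂ g ∧
          Tendsto (fun k => ANorm p q r ϑ₃ ϑ₂ (fun x => f (φ k) x - g x)) atTop (nhds 0) := by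
  obtain ⟨C, -, hC⟩ := hprec
  have hC_norm (x) : ‖ϑ₃ x‖ ≤ C * ‖ϑ₁ x‖ := by
    simpa only [Real.norm_of_nonneg (h1.pos x).le, Real.norm_of_nonneg (h3.pos x).le] using hC x
  obtain ⟨δ, hδ, a, ha, hδa⟩ := hnv.exists_seq
  obtain ⟨M, hM⟩ := h1.exists_ANorm_normalizedGaussian_le h2 p q hr
  refine ⟨fun f hf => ⟨hf.1.of_le_const_mul one_pos hC_norm, hf.2⟩,
    fun n => normalizedGaussian ϑ₁ (a n),
    fun n => memA_normalizedGaussian ((hM (a n)).trans_lt ENNReal.coe_lt_top),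
    ⟨M, fun n => by simpa using hM (a n)⟩, ?_⟩
  rintro ⟨φ, g, hφ, ⟨⟨hg, -⟩, -⟩, hlim⟩
  refine h1.not_tendsto_amalgamNorm_normalizedGaussian_sub hp one_pos h3 hC_norm
    (ha.comp hφ.tendsto_atTop) hδ (fun k => hδa (φ k)) hg ?_
  exact tendsto_of_tendsto_of_tendsto_of_le_of_le tendsto_const_nhds hlim (fun _ => zero_le)
    fun _ => le_self_add

/-- if `ϑ₃ ≺ ϑ₁` and `ϑ₃/ϑ₁` does not tend to zero at infinity, then
`A^{p,1,q,r}_{ϑ₁,ϑ₂}(ℝ^d) ⊆ A^{p,1,q,r}_{ϑ₃,ϑ₂}(ℝ^d)` and the inclusion map is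
never compact. -/
theorem A_inclusion_never_compact {d : ℕ} (p q r : ℝ) (hp : 1 < p) (hq : 1 < q) (hr : 1 < r)
    (ϑ₁ ϑ₂ ϑ₃ : (Fin d → ℝ) → ℝ)
    (h1 : IsBeurling ϑ₁) (h2 : IsBeurling ϑ₂) (h3 : IsBeurling ϑ₃)
    (hprec : Prec ϑ₃ ϑ₁) (hnv : NotVanishingAtInfty (fun x => ϑ₃ x / ϑ₁ x)) :
    (∀ f : (Fin d → ℝ) → ℂ, MemA p q r ϑ₁ ϑ₂ f → MemA p q r ϑ₃ ϑ₂ f) ∧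
    ∃ f : ℕ → (Fin d → ℝ) → ℂ,
      (∀ n, MemA p q r ϑ₁ ϑ₂ (f n)) ∧
      (∃ M : ℝ, ∀ n, ANorm p q r ϑ₁ ϑ₂ (f n) ≤ ENNReal.ofReal M) ∧
      ¬ ∃ (φ : ℕ → ℕ) (g : (Fin d → ℝ) → ℂ), StrictMono φ ∧ MemA p q r ϑ₃ ϑ₂ g ∧
          Tendsto (fun k => ANorm p q r ϑ₃ ϑ₂ (fun x => f (φ k) x - g x)) atTop (nhds 0) :=
  A_inclusion_never_compact_general hp.le (one_pos.trans hq) (one_pos.trans hr) h1 h2.hasExpGrowth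
    h3 hprec hnv
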